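/- Let G be an internally 4-connected nonplanar graph that is a minor of some Möbius ladder. Then G is isomorphic to M_n or to C²_{2n−1} for some integer n ≥ 3. -/

import Mathlib

open SimpleGraph

/-- `H` is a minor of `G` (branch-set / model definition). -/
def IsMinor {W V : Type*} (H : SimpleGraph W) (G : SimpleGraph V) : Prop :=
  ∃ B : W → Set V,
    (∀ w, (B w).Nonempty) ∧
    (∀ w, (G.induce (B w)).Connected) ∧
    (Pairwise fun w₁ w₂ => Disjoint (B w₁) (B w₂)) ∧
    (∀ ⦃w₁ w₂ : W⦄, H.Adj w₁ w₂ → ∃ v₁ ∈ B w₁, ∃ v₂ ∈ B w₂, G.Adj v₁ v₂)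

def K5 : SimpleGraph (Fin 5) := ⊤

def K33 : SimpleGraph (Fin 3 ⊕ Fin 3) := completeBipartiteGraph (Fin 3) (Fin 3)

/-- A graph is planar iff it has neither a `K₅` nor a `K₃,₃` minor (Wagner's theorem). -/
def Planar {V : Type*} (G : SimpleGraph V) : Prop := ¬ IsMinor K5 G ∧ ¬ IsMinor K33 G

/-- `G / uw`: contract the edge `uw`, merging `w` into `u` (the vertex `w` becomes isolated). -/
def contractEdge {V : Type*} (G : SimpleGraph V) (u w : V) : SimpleGraph V :=
  SimpleGraph.fromRel fun a b =>
    a ≠ w ∧ b ≠ w ∧ (G.Adj a b ∨ (a = u ∧ G.Adj w b) ∨ (b = u ∧ G.Adj a w))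

/-- A nonplanar graph is almost-planar if for every edge, deletion or contraction is planar. -/
def AlmostPlanar {V : Type*} (G : SimpleGraph V) : Prop :=
  ¬ Planar G ∧ ∀ ⦃u v : V⦄, G.Adj u v →
    (Planar (G.deleteEdges {s(u, v)}) ∨ Planar (contractEdge G u v))

/-- `G` is `k`-connected: more than `k` vertices and deleting fewer than `k` vertices
leaves a connected graph. -/
def KConnected {V : Type*} (G : SimpleGraph V) (k : ℕ) : Prop :=
  k < Nat.card V ∧ ∀ s : Set V, s.ncard < k → (G.induce (sᶜ)).Connected

/-- `{G[A], G[B]}` is a `k`-separation of `G`. -/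
def IsSep {V : Type*} (G : SimpleGraph V) (k : ℕ) (A B : Set V) : Prop :=
  A ∪ B = Set.univ ∧ A ≠ Set.univ ∧ B ≠ Set.univ ∧ (A ∩ B).ncard = k ∧
  ∀ ⦃x y : V⦄, G.Adj x y → (x ∈ A ∧ y ∈ A) ∨ (x ∈ B ∧ y ∈ B)

/-- The star `K_{1,3}`, with centre `0`. -/
def K13 : SimpleGraph (Fin 4) := SimpleGraph.fromRel fun a _ => a = 0

def InternallyFourConnected {V : Type*} (G : SimpleGraph V) : Prop :=
  KConnected G 3 ∧ 5 ≤ Nat.card V ∧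
  ∀ A B : Set V, IsSep G 3 A B →
    Xor' (Nonempty (G.induce A ≃g K13)) (Nonempty (G.induce B ≃g K13))

/-- The wheel `W_n`: a cycle of length `n` plus a hub (`none`) joined to all of it. -/
def wheelGraph (n : ℕ) : SimpleGraph (Option (Fin n)) :=
  SimpleGraph.fromRel fun a b =>
    match a, b with
    | some i, some j => j.val = (i.val + 1) % n
    | none, some _ => True
    | _, _ => False

def IsWheel {V : Type*} (G : SimpleGraph V) : Prop :=
  ∃ n, 3 ≤ n ∧ Nonempty (G ≃g wheelGraph n)

/-- The double wheel `DW_n`: a cycle of length `n` plus two adjacent hubs joined to all of it. -/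
def doubleWheel (n : ℕ) : SimpleGraph (Fin n ⊕ Fin 2) :=
  SimpleGraph.fromRel fun a b =>
    match a, b with
    | .inl i, .inl j => j.val = (i.val + 1) % n
    | .inl _, .inr _ => True
    | .inr _, .inr _ => True
    | _, _ => False

/-- The Möbius ladder `M_n`: a cycle of length `2n` plus all "opposite" chords. -/
def mobiusLadder (n : ℕ) : SimpleGraph (Fin (2 * n)) :=
  SimpleGraph.fromRel fun i j =>
    j.val = (i.val + 1) % (2 * n) ∨ j.val = (i.val + n) % (2 * n)

/-- `C²_m`: a cycle of length `m` plus all chords between vertices at distance two. -/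
def squareCycle (m : ℕ) : SimpleGraph (Fin m) :=
  SimpleGraph.fromRel fun i j =>
    j.val = (i.val + 1) % m ∨ j.val = (i.val + 2) % m

/-- The alternating double wheel `AW_{2n}`: a cycle of length `2n` plus two adjacent hubs,
each joined to alternating cycle vertices. -/
def altDoubleWheel (n : ℕ) : SimpleGraph (Fin (2 * n) ⊕ Fin 2) :=
  SimpleGraph.fromRel fun a b =>
    match a, b with
    | .inl i, .inl j => j.val = (i.val + 1) % (2 * n)
    | .inl i, .inr k => i.val % 2 = k.val
    | .inr _, .inr _ => True
    | _, _ => False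

/-- The class `𝒲`: three wheels glued along a common triangle `V₀`, with no other edges. -/
def InClassW {V : Type*} (G : SimpleGraph V) : Prop :=
  ∃ P : V → Fin 4,
    (P ⁻¹' {0}).ncard = 3 ∧
    (∀ x y : V, P x = 0 → P y = 0 → x ≠ y → G.Adj x y) ∧
    (∀ i : Fin 4, i ≠ 0 → IsWheel (G.induce {v | P v = 0 ∨ P v = i})) ∧
    (∀ ⦃x y : V⦄, G.Adj x y → ∃ i : Fin 4, i ≠ 0 ∧ (P x = 0 ∨ P x = i) ∧ (P y = 0 ∨ P y = i))

/-- `EX₁`: `K₃,₃` plus a vertex joined to all of one colour class. -/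
def EX1 : SimpleGraph (Option (Fin 3 ⊕ Fin 3)) :=
  SimpleGraph.fromRel fun a b =>
    match a, b with
    | some (.inl _), some (.inr _) => True
    | none, some (.inl _) => True
    | _, _ => False

/-- `EX₂`: `K₅` plus a vertex joined to three of its vertices. -/
def EX2 : SimpleGraph (Option (Fin 5)) :=
  SimpleGraph.fromRel fun a b =>
    match a, b with
    | some i, some j => i ≠ j
    | none, some j => j.val < 3
    | _, _ => False

/-- `EX₈`: `K₃,₃` plus a vertex joined to two vertices of one class and one of the other. -/
def EX8 : SimpleGraph (Option (Fin 3 ⊕ Fin 3)) :=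
  SimpleGraph.fromRel fun a b =>
    match a, b with
    | some (.inl _), some (.inr _) => True
    | none, some x => x = Sum.inl 0 ∨ x = Sum.inl 1 ∨ x = Sum.inr 0
    | _, _ => False

/-- `K₅ʰ`: subdivide the edges `01` and `02` of `K₅` and join the two subdivision vertices. -/
def K5h : SimpleGraph (Fin 5 ⊕ Fin 2) :=
  SimpleGraph.fromRel fun a b =>
    match a, b with
    | .inl i, .inl j =>
        i ≠ j ∧ ¬(i = 0 ∧ j = 1) ∧ ¬(i = 1 ∧ j = 0) ∧ ¬(i = 0 ∧ j = 2) ∧ ¬(i = 2 ∧ j = 0)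
    | .inl i, .inr k => (k = 0 ∧ (i = 0 ∨ i = 1)) ∨ (k = 1 ∧ (i = 0 ∨ i = 2))
    | .inr _, .inr _ => True
    | _, _ => False

/-- `K₃,₃ʰ`: subdivide two edges of `K₃,₃` at a common endpoint and join
the two subdivision vertices. -/
def K33h : SimpleGraph ((Fin 3 ⊕ Fin 3) ⊕ Fin 2) :=
  SimpleGraph.fromRel fun a b =>
    match a, b with
    | .inl (.inl i), .inl (.inr j) => ¬(i = 0 ∧ (j = 0 ∨ j = 1))
    | .inl (.inr j), .inl (.inl i) => ¬(i = 0 ∧ (j = 0 ∨ j = 1))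
    | .inl x, .inr k =>
        (k = 0 ∧ (x = Sum.inl 0 ∨ x = Sum.inr 0)) ∨ (k = 1 ∧ (x = Sum.inl 0 ∨ x = Sum.inr 1))
    | .inr _, .inr _ => True
    | _, _ => False

/-- `K₅⁺`: `K₅` plus a pendant vertex. -/
def K5plus : SimpleGraph (Option (Fin 5)) :=
  SimpleGraph.fromRel fun a b =>
    match a, b with
    | some i, some j => i ≠ j
    | none, some j => j = 0
    | _, _ => False

/-- `K₃,₃⁺`: `K₃,₃` plus a pendant vertex. -/
def K33plus : SimpleGraph (Option (Fin 3 ⊕ Fin 3)) :=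
  SimpleGraph.fromRel fun a b =>
    match a, b with
    | some (.inl _), some (.inr _) => True
    | none, some x => x = Sum.inl 0
    | _, _ => False

/-- `K₅ ⊕ e`: disjoint union of `K₅` and one edge. -/
def K5oplus : SimpleGraph (Fin 5 ⊕ Fin 2) :=
  SimpleGraph.fromRel fun a b =>
    match a, b with
    | .inl i, .inl j => i ≠ j
    | .inr _, .inr _ => True
    | _, _ => False

/-- `K₃,₃ ⊕ e`: disjoint union of `K₃,₃` and one edge. -/
def K33oplus : SimpleGraph ((Fin 3 ⊕ Fin 3) ⊕ Fin 2) :=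
  SimpleGraph.fromRel fun a b =>
    match a, b with
    | .inl (.inl _), .inl (.inr _) => True
    | .inr _, .inr _ => True
    | _, _ => False

/-- The triad addition of `H` at `x y z`: add a new vertex joined to `x`, `y`, `z`. -/
def triadAddition {U : Type*} (H : SimpleGraph U) (x y z : U) : SimpleGraph (Option U) :=
  SimpleGraph.fromRel fun a b =>
    match a, b with
    | some u, some v => H.Adj u v
    | none, some u => u = x ∨ u = y ∨ u = z
    | _, _ => False

def IsTriadAdditionOf {V U : Type*} (G : SimpleGraph V) (H : SimpleGraph U) : Prop :=
  ∃ x y z : U, x ≠ y ∧ y ≠ z ∧ x ≠ z ∧ Nonempty (G ≃g triadAddition H x y z)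

/-- `G` is obtained from `H` by subdividing (possibly repeatedly) edges of `H`,
all of which lie in `S`. -/
def IsSubdivisionWithin {V W : Type*} (G : SimpleGraph V) (H : SimpleGraph W)
    (S : Set (Sym2 W)) : Prop :=
  ∃ (f : W ↪ V) (p : ∀ ⦃u v : W⦄, H.Adj u v → G.Walk (f u) (f v)),
    (∀ ⦃u v : W⦄ (h : H.Adj u v), (p h).IsPath) ∧
    (∀ ⦃u v : W⦄ (h : H.Adj u v), p h.symm = (p h).reverse) ∧
    (∀ ⦃u v : W⦄ (h : H.Adj u v), s(u, v) ∉ S → (p h).length = 1) ∧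
    (∀ ⦃u v : W⦄ (h : H.Adj u v) (w : W), f w ∈ (p h).support → w = u ∨ w = v) ∧
    (∀ ⦃u v u' v' : W⦄ (h : H.Adj u v) (h' : H.Adj u' v'), s(u, v) ≠ s(u', v') →
      ∀ x : V, x ∈ (p h).support → x ∈ (p h').support → x ∈ Set.range f) ∧
    (∀ x : V, x ∈ Set.range f ∨ ∃ (u v : W) (h : H.Adj u v), x ∈ (p h).support) ∧
    (∀ e ∈ G.edgeSet, ∃ (u v : W) (h : H.Adj u v), e ∈ (p h).edges)

/-- `G` is a subdivision of `H`. -/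
def IsSubdivision {V W : Type*} (G : SimpleGraph V) (H : SimpleGraph W) : Prop :=
  IsSubdivisionWithin G H Set.univ

/-- `D(H)`: the set of edges of `H` whose deletion leaves a planar graph. -/
def Dset {U : Type*} (H : SimpleGraph U) : Set (Sym2 U) :=
  {e | e ∈ H.edgeSet ∧ Planar (H.deleteEdges {e})}

/-- `G[A]` together with all edges between vertices of `T` (`T ⊆ A` intended). -/
def deltaGraph {V : Type*} (G : SimpleGraph V) (A T : Set V) : SimpleGraph A :=
  SimpleGraph.fromRel fun a b => G.Adj a.1 b.1 ∨ (a.1 ∈ T ∧ b.1 ∈ T)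

/-- `G[A]^Y` for the separation `{G[A], G[B]}`: add a new vertex joined to `A ∩ B`. -/
def sepY {V : Type*} (G : SimpleGraph V) (A B : Set V) : SimpleGraph (Option A) :=
  SimpleGraph.fromRel fun x y =>
    match x, y with
    | some a, some b => G.Adj a.1 b.1
    | none, some a => a.1 ∈ A ∩ B
    | _, _ => False

/-- `G₂` is obtained from `G` by adding isolated vertices. -/
def AddIsolated {V₂ V : Type*} (G₂ : SimpleGraph V₂) (G : SimpleGraph V) : Prop :=
  ∃ f : V ↪ V₂, (∀ a b : V, G₂.Adj (f a) (f b) ↔ G.Adj a b) ∧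
    ∀ x : V₂, x ∉ Set.range f → ∀ y : V₂, ¬ G₂.Adj x y

/-- The set of non-isolated vertices of `G` (so `G* = G.induce (core G)`). -/
def core {V : Type*} (G : SimpleGraph V) : Set V := {v | ∃ w, G.Adj v w}

/-- `G` is obtained from `G'` by 3-summing wheels onto distinct triangles of `G'`. -/
def SumWheelsOnto {V U : Type*} (G : SimpleGraph V) (G' : SimpleGraph U) : Prop :=
  ∃ (g : U ↪ V) (k : ℕ) (Wp : Fin k → Set V) (T : Fin k → Set U),
    (∀ i, (T i).ncard = 3) ∧
    (∀ i, ∀ x ∈ T i, ∀ y ∈ T i, x ≠ y → G'.Adj x y) ∧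
    Function.Injective T ∧
    (∀ i, Disjoint (Wp i) (Set.range ⇑g)) ∧
    (Pairwise fun i j => Disjoint (Wp i) (Wp j)) ∧
    (Set.range ⇑g ∪ ⋃ i, Wp i) = Set.univ ∧
    (∀ i, IsWheel (deltaGraph G (Wp i ∪ ⇑g '' T i) (⇑g '' T i))) ∧
    (∀ a b : U, G.Adj (g a) (g b) → G'.Adj a b) ∧
    (∀ a b : U, G'.Adj a b → (G.Adj (g a) (g b) ∨ ∃ i, a ∈ T i ∧ b ∈ T i)) ∧
    (∀ ⦃x y : V⦄, G.Adj x y → (x ∈ Set.range ⇑g ∧ y ∈ Set.range ⇑g) ∨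
      ∃ i, x ∈ Wp i ∪ ⇑g '' T i ∧ y ∈ Wp i ∪ ⇑g '' T i) ∧
    (∀ i, ∀ x ∈ Wp i, ∀ ⦃y : V⦄, G.Adj x y → y ∈ Wp i ∪ ⇑g '' T i)

/-- `H` has an edge whose deletion and contraction are both nonplanar. -/
def HasBadEdge {V : Type*} (H : SimpleGraph V) : Prop :=
  ∃ u v : V, H.Adj u v ∧ ¬ Planar (H.deleteEdges {s(u, v)}) ∧ ¬ Planar (contractEdge H u v)

/-!
Unroll the rim of `M_m` to `ℤ` and record a minor `G` by the map sending a position to the vertex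
whose branch set contains it, with `m` as small as possible. A rung with its ends in different
branch sets must carry an edge of `G` that no other rung carries: otherwise it can be deleted, and
as every vertex of `G` has degree at least 3, each of its ends can be absorbed into a neighbouring
rim position, so `G` is a minor of `M_(m-1)`.

If some rung lies inside a branch set, that branch set together with the ends of any other rung
separates `G`. These separations have order at most 3, and two of the three vertices are adjacent
whenever they differ, so internal 4-connectivity makes them all trivial. Sweeping the second rung
along the ladder shows that `G` has only 5 vertices, hence `G = K₅ = C²_5`.

If no rung is contracted, then contracting the rail `i, i + 1` forces the contraction of the rail
`i + m + 1, i + m + 2`, because a vertex of degree 3 does not lie in a triangle. Hence either no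
rail is contracted, and `G = M_m`, or `m` is odd and every other rail is contracted, and
`G = C²_m`.
-/

/-! ### Internal 4-connectivity -/

section Connectivity

variable {V : Type*} {G : SimpleGraph V} {A B : Set V} {j k : ℕ} {a b c x y z : V}

lemma IsSep.symm (hs : IsSep G k A B) : IsSep G k B A :=
  ⟨Set.union_comm A B ▸ hs.1, hs.2.2.1, hs.2.1, Set.inter_comm A B ▸ hs.2.2.2.1,
    fun _ _ hxy => (hs.2.2.2.2 hxy).symm⟩

lemma IsSep.exists_mem_notMem (hs : IsSep G k A B) : ∃ a ∈ A, a ∉ B := by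
  obtain ⟨a, haB⟩ := (Set.ne_univ_iff_exists_notMem B).1 hs.2.2.1
  exact ⟨a, (hs.1.ge (Set.mem_univ a)).resolve_right haB, haB⟩

lemma IsSep.mem_of_adj (hs : IsSep G k A B) (haB : a ∉ B) (hab : G.Adj a b) : b ∈ A :=
  (hs.2.2.2.2 hab).elim And.right fun h => absurd h.1 haB

lemma isSep_insert_neighborSet (hx : insert x (G.neighborSet x) ≠ Set.univ) :
    IsSep G (G.neighborSet x).ncard (insert x (G.neighborSet x)) {x}ᶜ := by
  refine ⟨?_, hx, fun h => h.ge (Set.mem_univ x) rfl, ?_, fun y z hyz => ?_⟩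
  · rw [Set.insert_union, ← Set.union_insert, Set.insert_eq, Set.union_compl_self,
      Set.union_univ]
  · congr 1
    ext y
    simp only [Set.mem_inter_iff, Set.mem_insert_iff, Set.mem_compl_iff, Set.mem_singleton_iff,
      mem_neighborSet]
    exact ⟨fun h => h.1.resolve_left h.2, fun h => ⟨.inr h, h.ne'⟩⟩
  · by_cases hy : y = x
    · subst hy
      exact .inl ⟨.inl rfl, .inr hyz⟩
    · by_cases hz : z = x
      · subst hz
        exact .inl ⟨.inr hyz.symm, .inl rfl⟩
      · exact .inr ⟨hy, hz⟩

lemma KConnected.finite (h : KConnected G k) : Finite V :=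
  Nat.finite_of_card_ne_zero (by have := h.1; omega)

lemma KConnected.mono (h : KConnected G k) (hjk : j ≤ k) : KConnected G j :=
  ⟨hjk.trans_lt h.1, fun s hs => h.2 s (hs.trans_le hjk)⟩

lemma KConnected.le_of_isSep (h : KConnected G k) (hs : IsSep G j A B) : k ≤ j := by
  by_contra! hjk
  obtain ⟨a, -, haB⟩ := hs.exists_mem_notMem
  obtain ⟨b, hbB, hbA⟩ := hs.symm.exists_mem_notMem
  obtain ⟨p⟩ := (h.2 (A ∩ B) (hs.2.2.2.1 ▸ hjk)).preconnected
    ⟨a, fun h => haB h.2⟩ ⟨b, fun h => hbA h.1⟩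
  obtain ⟨d, -, hdfst, hdsnd⟩ := p.exists_boundary_dart {v | v.1 ∉ B} haB (not_not.2 hbB)
  exact d.snd.2 ⟨hs.mem_of_adj hdfst d.adj, not_not.1 hdsnd⟩

lemma KConnected.le_ncard_neighborSet (h : KConnected G k) (x : V) :
    k ≤ (G.neighborSet x).ncard := by
  by_cases hx : insert x (G.neighborSet x) = Set.univ
  · have hcard := Set.ncard_insert_le x (G.neighborSet x)
    rw [hx, Set.ncard_univ] at hcard
    have := h.1
    omega
  · exact h.le_of_isSep (isSep_insert_neighborSet hx)

lemma KConnected.exists_adj_notMem (h : KConnected G k) (x : V) {S : Set V} (hS : S.ncard < k) :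
    ∃ y, G.Adj x y ∧ y ∉ S :=
  have := h.finite
  Set.exists_mem_notMem_of_ncard_lt_ncard (hS.trans_le (h.le_ncard_neighborSet x))

lemma KConnected.exists_adj_ne_ne (h : KConnected G 3) (x a b : V) :
    ∃ y, G.Adj x y ∧ y ≠ a ∧ y ≠ b := by
  have hle : ({a, b} : Set V).ncard ≤ 2 := by simpa using Set.ncard_insert_le a {b}
  obtain ⟨y, hy, hyS⟩ := h.exists_adj_notMem x (Nat.lt_succ_of_le hle)
  exact ⟨y, hy, fun ha => hyS (.inl ha), fun hb => hyS (.inr hb)⟩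

lemma K13_adj {i j : Fin 4} : K13.Adj i j ↔ i ≠ j ∧ (i = 0 ∨ j = 0) := by
  simp only [K13, fromRel_adj]

/-- A vertex of `A \ B` has two neighbours in `A`, so it is the centre of the star `G[A]` and the
vertices of `A ∩ B` are leaves. -/
lemma KConnected.isIndepSet_inter_of_iso_K13 (h : KConnected G 2) (hs : IsSep G k A B)
    (φ : G.induce A ≃g K13) : G.IsIndepSet (A ∩ B) := by
  obtain ⟨a, haA, haB⟩ := hs.exists_mem_notMem
  have zero_of_adj {u v : V} (hu : u ∈ A) (hv : v ∈ A) (huv : G.Adj u v) :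
      φ ⟨u, hu⟩ = 0 ∨ φ ⟨v, hv⟩ = 0 :=
    (K13_adj.1 <| φ.map_adj_iff.2 (show (G.induce A).Adj ⟨u, hu⟩ ⟨v, hv⟩ from huv)).2
  have hcentre : φ ⟨a, haA⟩ = 0 := by
    obtain ⟨u, hau, hu⟩ := h.exists_adj_notMem a (S := {(φ.symm 0).1}) (by simp)
    have huA := hs.mem_of_adj haB hau
    refine (zero_of_adj haA huA hau).resolve_right fun hu0 => hu ?_
    simp [← hu0]
  have eq_of_zero {v : V} (hv : v ∈ A) (hv0 : φ ⟨v, hv⟩ = 0) : v = a :=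
    congrArg Subtype.val (φ.injective (hv0.trans hcentre.symm))
  intro u hu v hv _ huv
  rcases zero_of_adj hu.1 hv.1 huv with h0 | h0
  · exact haB (eq_of_zero hu.1 h0 ▸ hu.2)
  · exact haB (eq_of_zero hv.1 h0 ▸ hv.2)

namespace InternallyFourConnected

lemma isIndepSet_inter_of_isSep (h : InternallyFourConnected G) (hs : IsSep G 3 A B) :
    G.IsIndepSet (A ∩ B) := by
  have h2 : KConnected G 2 := h.1.mono (by norm_num)
  rcases h.2.2 A B hs with ⟨⟨φ⟩, -⟩ | ⟨⟨φ⟩, -⟩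
  · exact h2.isIndepSet_inter_of_iso_K13 hs φ
  · exact Set.inter_comm A B ▸ h2.isIndepSet_inter_of_iso_K13 hs.symm φ

lemma eq_univ_or_eq_univ (h : InternallyFourConnected G) (hAB : A ∪ B = Set.univ)
    (hadj : ∀ ⦃u v : V⦄, G.Adj u v → (u ∈ A ∧ v ∈ A) ∨ (u ∈ B ∧ v ∈ B))
    (hsub : A ∩ B ⊆ {x, y, z}) (hyz : y = z ∨ G.Adj y z) : A = Set.univ ∨ B = Set.univ := by
  by_contra! hne
  have hs : IsSep G (A ∩ B).ncard A B := ⟨hAB, hne.1, hne.2, rfl, hadj⟩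
  have hfin := h.1.finite
  have hge : 3 ≤ (A ∩ B).ncard := h.1.le_of_isSep hs
  have hpair : ({y, z} : Set V).ncard ≤ 2 := by simpa using Set.ncard_insert_le y {z}
  have hle : ({x, y, z} : Set V).ncard ≤ ({y, z} : Set V).ncard + 1 := Set.ncard_insert_le x {y, z}
  have heq : A ∩ B = {x, y, z} := Set.eq_of_subset_of_ncard_le hsub (by omega)
  rw [← heq] at hle
  rcases hyz with rfl | hyz
  · rw [Set.pair_eq_singleton, Set.ncard_singleton] at hle
    omega
  · have hs3 : IsSep G 3 A B := le_antisymm (by omega) hge ▸ hs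
    exact h.isIndepSet_inter_of_isSep hs3 (heq.ge (by simp)) (heq.ge (by simp)) hyz.ne hyz

lemma isIndepSet_neighborSet (h : InternallyFourConnected G)
    (hx : (G.neighborSet x).ncard = 3) : G.IsIndepSet (G.neighborSet x) := by
  have hne : insert x (G.neighborSet x) ≠ Set.univ := fun heq => by
    have hle := Set.ncard_insert_le x (G.neighborSet x)
    rw [heq, Set.ncard_univ] at hle
    have := h.2.1
    omega
  have hindep := h.isIndepSet_inter_of_isSep (hx ▸ isSep_insert_neighborSet hne)
  intro y hy z hz hyz
  exact hindep ⟨.inr hy, Adj.ne' hy⟩ ⟨.inr hz, Adj.ne' hz⟩ hyz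

lemma exists_adj_ne (h : InternallyFourConnected G) (x a : V) (hbc : G.Adj b c) :
    ∃ y, G.Adj x y ∧ y ≠ a ∧ y ≠ b ∧ y ≠ c := by
  by_contra! hcon
  have hsub : G.neighborSet x ⊆ {a, b, c} := fun y hy => by
    by_contra hy'
    simp only [Set.mem_insert_iff, Set.mem_singleton_iff, not_or] at hy'
    exact hy'.2.2 (hcon y hy hy'.1 hy'.2.1)
  have hge := h.1.le_ncard_neighborSet x
  have hle : ({a, b, c} : Set V).ncard ≤ 3 :=
    (Set.ncard_insert_le a {b, c}).trans (by rw [Set.ncard_pair hbc.ne])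
  have heq := Set.eq_of_subset_of_ncard_le hsub (hle.trans hge)
  refine h.isIndepSet_neighborSet (hge.antisymm' (heq ▸ hle)) ?_ ?_ hbc.ne hbc <;> simp [heq]

lemma eq_top_of_card_le_five (h : InternallyFourConnected G) (hcard : Nat.card V ≤ 5) :
    G = ⊤ := by
  have hfin := h.1.finite
  have hcompl (x : V) := Set.ncard_add_ncard_compl (G.neighborSet x)
  have hge (x : V) := h.1.le_ncard_neighborSet x
  have hfour (x : V) : (G.neighborSet x).ncard ≠ 3 := fun hx => by
    obtain ⟨y, hy⟩ := Set.nonempty_of_ncard_ne_zero (hx.trans_ne three_ne_zero)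
    have hsub : G.neighborSet y ⊆ (G.neighborSet x)ᶜ := fun z hyz hxz =>
      h.isIndepSet_neighborSet hx hy hxz hyz.ne hyz
    have := Set.ncard_le_ncard hsub
    have := hcompl x
    have := hge y
    omega
  ext x y
  refine ⟨Adj.ne, fun hne => ?_⟩
  by_contra hxy
  have hsub : {x, y} ⊆ (G.neighborSet x)ᶜ := by
    rintro z (rfl | rfl)
    exacts [G.irrefl, hxy]
  have hle := Set.ncard_le_ncard hsub
  rw [Set.ncard_pair hne] at hle
  have := hcompl x
  have := hge x
  have := hfour x
  omega

lemma nonempty_iso_squareCycle_five (h : InternallyFourConnected G) (hcard : Nat.card V ≤ 5) :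
    Nonempty (G ≃g squareCycle 5) := by
  have hfin := h.1.finite
  have hsq : squareCycle 5 = ⊤ := by
    ext i j
    simp only [squareCycle, fromRel_adj, top_adj]
    revert i j
    decide
  rw [hsq, h.eq_top_of_card_le_five hcard]
  exact ⟨Iso.completeGraph (Finite.equivFinOfCardEq (hcard.antisymm h.2.1))⟩

end InternallyFourConnected

end Connectivity

/-! ### Minors -/

section Minors

variable {V W : Type*} {G : SimpleGraph V} {H : SimpleGraph W} {B : V → Set W}

/-- The sets `B v` are the branch sets of a model of `G` as a minor of `H`; `IsMinor G H` asserts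
that some such family exists. -/
structure IsMinorModel (G : SimpleGraph V) (H : SimpleGraph W) (B : V → Set W) : Prop where
  nonempty : ∀ v, (B v).Nonempty
  connected : ∀ v, (H.induce (B v)).Connected
  pairwise_disjoint : Pairwise fun u v => Disjoint (B u) (B v)
  exists_adj : ∀ ⦃u v⦄, G.Adj u v → ∃ a ∈ B u, ∃ b ∈ B v, H.Adj a b

lemma IsMinorModel.update_insert [DecidableEq V] (h : IsMinorModel G H B) {v : V} {a b : W}
    (ha : a ∈ B v) (hab : H.Adj a b) (hb : ∀ u, b ∉ B u) :
    IsMinorModel G H (Function.update B v (insert b (B v))) := by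
  have hsub : B ≤ Function.update B v (insert b (B v)) :=
    le_update_self_iff.2 (Set.subset_insert b (B v))
  have hdisj {u : V} (hu : u ≠ v) : Disjoint (B u) (insert b (B v)) :=
    Set.disjoint_insert_right.2 ⟨hb u, h.pairwise_disjoint hu⟩
  refine ⟨fun u => (h.nonempty u).mono (hsub u), fun u => ?_, fun u w huw => ?_, fun u w huw => ?_⟩
  · rcases eq_or_ne u v with rfl | hu
    · rw [Function.update_self, ← Set.singleton_union, Set.union_comm]
      exact connected_induce_union (h.connected u).preconnected
        Preconnected.of_subsingleton ha rfl hab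
    · rw [Function.update_of_ne hu]
      exact h.connected u
  · rcases eq_or_ne u v with rfl | hu
    · rw [Function.update_self, Function.update_of_ne huw.symm]
      exact (hdisj huw.symm).symm
    · rcases eq_or_ne w v with rfl | hw
      · rw [Function.update_self, Function.update_of_ne hu]
        exact hdisj hu
      · rw [Function.update_of_ne hu, Function.update_of_ne hw]
        exact h.pairwise_disjoint huw
  · obtain ⟨x, hx, y, hy, hxy⟩ := h.exists_adj huw
    exact ⟨x, hsub u hx, y, hsub w hy, hxy⟩

lemma IsMinor.exists_isMinorModel_cover [Nonempty V] [Finite V] [Finite W] (hGH : IsMinor G H)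
    (hH : H.Connected) : ∃ B, IsMinorModel G H B ∧ ∀ a, ∃ v, a ∈ B v := by
  classical
  obtain ⟨B₀, hne, hconn, hdisj, hadj⟩ := hGH
  obtain ⟨B, hB, hmax⟩ := (Set.toFinite {B | IsMinorModel G H B}).exists_maximal
    ⟨B₀, hne, hconn, hdisj, hadj⟩
  refine ⟨B, hB, fun b => ?_⟩
  by_contra hb
  obtain ⟨v⟩ := ‹Nonempty V›
  obtain ⟨a, ha⟩ := hB.nonempty v
  obtain ⟨p⟩ := hH.preconnected a b
  obtain ⟨d, -, ⟨u, hu⟩, hd⟩ := p.exists_boundary_dart {a | ∃ v, a ∈ B v} ⟨v, ha⟩ hb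
  have hmem : d.snd ∈ Function.update B u (insert d.snd (B u)) u := by
    rw [Function.update_self]
    exact Set.mem_insert _ _
  exact hd ⟨u, hmax (hB.update_insert hu d.adj (not_exists.1 hd))
    (le_update_self_iff.2 (Set.subset_insert _ _)) u hmem⟩

theorem IsMinor.exists_map [Nonempty V] [Finite V] [Finite W] (hGH : IsMinor G H)
    (hH : H.Connected) : ∃ ρ : W → V, (∀ v, (H.induce (ρ ⁻¹' {v})).Connected) ∧
      ∀ ⦃u v⦄, G.Adj u v → ∃ a b, ρ a = u ∧ ρ b = v ∧ H.Adj a b := by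
  obtain ⟨B, hB, hcover⟩ := hGH.exists_isMinorModel_cover hH
  choose ρ hρ using hcover
  have hfiber (v : V) : ρ ⁻¹' {v} = B v := by
    ext a
    refine ⟨fun h => h ▸ hρ a, fun h => ?_⟩
    exact hB.pairwise_disjoint.eq (Set.not_disjoint_iff.2 ⟨a, hρ a, h⟩)
  refine ⟨ρ, fun v => hfiber v ▸ hB.connected v, fun u v huv => ?_⟩
  obtain ⟨a, ha, b, hb, hab⟩ := hB.exists_adj huv
  rw [← hfiber] at ha hb
  exact ⟨a, b, ha, hb, hab⟩

end Minors

/-! ### Ladder models -/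

/-- A model of `G` as a minor of the Möbius ladder `M_m` with all rungs outside `R` deleted, its
branch sets covering all vertices. The rim is unrolled to `ℤ`, position `i` being the vertex
`i mod 2 * m`: the rails join `i` to `i + 1`, the rungs join `i` to `i + m`, and `f i` is the vertex
of `G` whose branch set contains `i`. The last field says that the branch sets are connected: a
predicate that is constant along each contracted rail and rung is constant on branch sets. -/
structure LadderModel {V : Type*} (G : SimpleGraph V) (m : ℤ) (R : Set ℤ) (f : ℤ → V) :
    Prop where
  periodic : Function.Periodic f (2 * m)
  surjective : Function.Surjective f
  exists_of_adj : ∀ ⦃u v⦄, G.Adj u v →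
    ∃ i, s(u, v) = s(f i, f (i + 1)) ∨ i ∈ R ∧ s(u, v) = s(f i, f (i + m))
  iff_of_eq : ∀ P : ℤ → Prop, (∀ i, P (i + 2 * m) ↔ P i) →
    (∀ i, f i = f (i + 1) → (P i ↔ P (i + 1))) →
    (∀ i ∈ R, f i = f (i + m) → (P i ↔ P (i + m))) →
    ∀ i j, f i = f j → (P i ↔ P j)

lemma two_mul_dvd_or_two_mul_dvd_sub {m x : ℤ} (h : m ∣ x) : 2 * m ∣ x ∨ 2 * m ∣ x - m := by
  obtain ⟨q, rfl⟩ := h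
  rcases q.even_or_odd' with ⟨t, rfl | rfl⟩
  · exact .inl ⟨t, by ring⟩
  · exact .inr ⟨t, by ring⟩

lemma add_one_emod {m : ℤ} (hm : 0 < m) (i : ℤ) :
    (i + 1) % m = i % m + 1 ∨ (i + 1) % m = 0 := by
  have hlt := Int.emod_lt_of_pos i hm
  have hnonneg := Int.emod_nonneg i hm.ne'
  rw [← Int.emod_add_emod]
  rcases (show i % m + 1 ≤ m by omega).lt_or_eq with hlt' | heq
  · exact .inl (Int.emod_eq_of_lt (by omega) hlt')
  · exact .inr (by rw [heq, Int.emod_self])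

namespace LadderModel

variable {V : Type*} {G : SimpleGraph V} {m n : ℤ} {R : Set ℤ} {f : ℤ → V} {i j k : ℤ}

lemma apply_eq_of_dvd (h : LadderModel G m R f) (hij : 2 * m ∣ i - j) : f i = f j := by
  obtain ⟨q, hq⟩ := hij
  rw [show i = j + q * (2 * m) by linear_combination hq]
  exact h.periodic.int_mul q j

lemma apply_eq_or_of_dvd (h : LadderModel G m R f) (hij : m ∣ i - j) :
    f i = f j ∨ f i = f (j + m) :=
  (two_mul_dvd_or_two_mul_dvd_sub hij).imp h.apply_eq_of_dvd fun hd =>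
    h.apply_eq_of_dvd (by rwa [← sub_sub])

lemma rung_eq_of_dvd (h : LadderModel G m R f) (hij : m ∣ i - j) :
    s(f i, f (i + m)) = s(f j, f (j + m)) := by
  rcases two_mul_dvd_or_two_mul_dvd_sub hij with hij | hij
  · rw [h.apply_eq_of_dvd hij, h.apply_eq_of_dvd (i := i + m) (j := j + m) (by simpa using hij)]
  · have hi : f i = f (j + m) := h.apply_eq_of_dvd (by rwa [← sub_sub])
    have him : f (i + m) = f j := h.apply_eq_of_dvd <| by
      obtain ⟨q, hq⟩ := hij
      exact ⟨q + 1, by linear_combination hq⟩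
    rw [hi, him, Sym2.eq_swap]

theorem of_comp {ψ : ℤ → ℤ} (h : LadderModel G m R (f ∘ ψ)) (hψ : Function.Surjective ψ)
    (hsucc : ∀ i, ψ (i + 1) = ψ i ∨ ψ (i + 1) = ψ i + 1)
    (hper : ∀ i, ψ (i + 2 * m) = ψ i + 2 * n) (hrung : ∀ i ∈ R, ψ (i + m) = ψ i + n) :
    LadderModel G n Set.univ f where
  periodic x := by
    obtain ⟨i, rfl⟩ := hψ x
    rw [← hper]
    exact h.periodic i
  surjective := h.surjective.of_comp
  exists_of_adj u v huv := by
    obtain ⟨i, hi | ⟨hiR, hi⟩⟩ := h.exists_of_adj huv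
    · rcases hsucc i with heq | heq
      · rw [Function.comp_apply, Function.comp_apply, heq] at hi
        rw [← mem_edgeSet, hi] at huv
        exact absurd huv G.irrefl
      · exact ⟨ψ i, .inl (heq ▸ hi)⟩
    · exact ⟨ψ i, .inr ⟨trivial, hrung i hiR ▸ hi⟩⟩
  iff_of_eq P hP hrail hrungP x y hxy := by
    obtain ⟨i, rfl⟩ := hψ x
    obtain ⟨j, rfl⟩ := hψ y
    refine h.iff_of_eq (P ∘ ψ) (fun i => ?_) (fun i hi => ?_) (fun i hiR hi => ?_) i j hxy
    · simp only [Function.comp_apply, hper, hP]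
    · simp only [Function.comp_apply] at hi ⊢
      rcases hsucc i with heq | heq <;> rw [heq] at hi ⊢
      exact hrail _ hi
    · simp only [Function.comp_apply, hrung i hiR] at hi ⊢
      exact hrungP _ trivial hi

lemma shift (h : LadderModel G m Set.univ f) (k : ℤ) :
    LadderModel G m Set.univ fun i => f (i + k) :=
  of_comp (m := m) (R := Set.univ) (ψ := (· - k))
    (by simpa only [Function.comp_def, sub_add_cancel]) (fun i => ⟨i + k, add_sub_cancel_right i k⟩)
    (fun i => .inr (add_sub_right_comm i 1 k)) (fun i => add_sub_right_comm i (2 * m) k)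
    (fun i _ => add_sub_right_comm i m k)

lemma dvd_of_apply_eq (h : LadderModel G m R f) (hnext : f k ≠ f (k + 1))
    (hprev : f (k - 1) ≠ f k) (hrung : ∀ i ∈ R, m ∣ i - k → f i ≠ f (i + m)) (hi : f i = f k) :
    2 * m ∣ i - k := by
  refine (h.iff_of_eq (2 * m ∣ · - k) (fun j => ?_) (fun j hj => ?_) (fun j hjR hj => ?_)
    i k hi).2 (by simp)
  · rw [add_sub_right_comm, dvd_add_self_right]
  · refine iff_of_false (fun hd => hnext ?_) (fun hd => hprev ?_)
    · rw [← h.apply_eq_of_dvd hd, hj]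
      exact h.apply_eq_of_dvd (by simpa using hd)
    · rw [← h.apply_eq_of_dvd hd, ← hj]
      exact (h.apply_eq_of_dvd (by rwa [sub_sub_eq_add_sub])).symm
  · have hm : m ∣ 2 * m := dvd_mul_left m 2
    refine iff_of_false (fun hd => hrung j hjR (hm.trans hd) hj) fun hd => hrung j hjR ?_ hj
    exact (dvd_add_self_right (b := j - k)).1 (by simpa [add_sub_right_comm] using hm.trans hd)

lemma eq_of_adj (h : LadderModel G m R f) (hnext : f k ≠ f (k + 1)) (hprev : f (k - 1) ≠ f k)
    (hrung : ∀ i ∈ R, m ∣ i - k → f i ≠ f (i + m)) {y : V} (hy : G.Adj (f k) y) :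
    y = f (k + 1) ∨ y = f (k - 1) ∨ (∃ i ∈ R, m ∣ i - k) ∧ y = f (k + m) := by
  have dvd {i : ℤ} (hi : f k = f i) : 2 * m ∣ i - k := h.dvd_of_apply_eq hnext hprev hrung hi.symm
  have hm : m ∣ 2 * m := dvd_mul_left m 2
  obtain ⟨i, hi | ⟨hiR, hi⟩⟩ := h.exists_of_adj hy <;>
    rcases Sym2.eq_iff.1 hi with ⟨hk, rfl⟩ | ⟨hk, rfl⟩
  · exact .inl (h.apply_eq_of_dvd (by simpa using dvd hk))
  · exact .inr (.inl (h.apply_eq_of_dvd (by rw [sub_sub_eq_add_sub]; exact dvd hk)))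
  · exact .inr (.inr ⟨⟨i, hiR, hm.trans (dvd hk)⟩, h.apply_eq_of_dvd (by simpa using dvd hk)⟩)
  · obtain ⟨q, hq⟩ := dvd hk
    exact .inr (.inr ⟨⟨i, hiR, 2 * q - 1, by linear_combination hq⟩,
      h.apply_eq_of_dvd ⟨q - 1, by linear_combination hq⟩⟩)

end LadderModel

section MobiusLadder

variable {V W : Type*} {G : SimpleGraph V} {H : SimpleGraph W}

lemma mobiusLadder_connected {m : ℕ} (hm : 0 < m) : (mobiusLadder m).Connected := by
  obtain ⟨k, hk⟩ := Nat.exists_eq_succ_of_ne_zero (n := 2 * m) (by omega)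
  have hpath : (pathGraph (2 * m)).Connected := hk ▸ pathGraph_connected k
  refine hpath.mono fun a b hab => ⟨hab.ne, ?_⟩
  rw [pathGraph_adj] at hab
  refine hab.imp (fun h => .inl ?_) fun h => .inl ?_
  · rw [h, Nat.mod_eq_of_lt b.2]
  · rw [h, Nat.mod_eq_of_lt a.2]

lemma ladderModel_mobiusLadder {m : ℕ} {c : ℤ → Fin (2 * m)}
    (hc : ∀ i, ((c i).val : ℤ) = i % (2 * m)) : LadderModel (mobiusLadder m) m Set.univ c := by
  have eq_iff (a : Fin (2 * m)) (i : ℤ) : a = c i ↔ (a.val : ℤ) = i % (2 * m) := by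
    rw [Fin.ext_iff, ← hc, Nat.cast_inj]
  have apply_val (a : Fin (2 * m)) : c a.val = a :=
    ((eq_iff _ _).2 (Int.emod_eq_of_lt (by omega) (by omega)).symm).symm
  have exists_of_rel ⦃a b : Fin (2 * m)⦄
      (h : b.val = (a.val + 1) % (2 * m) ∨ b.val = (a.val + m) % (2 * m)) :
      ∃ i : ℤ, s(a, b) = s(c i, c (i + 1)) ∨ i ∈ Set.univ ∧ s(a, b) = s(c i, c (i + m)) := by
    refine ⟨a.val, h.imp (fun hb => ?_) fun hb => ⟨trivial, ?_⟩⟩ <;>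
    · rw [apply_val, ← (eq_iff b _).2 (by exact_mod_cast hb)]
  refine ⟨fun i => ?_, fun a => ⟨a.val, apply_val a⟩, fun a b hab => ?_, fun P hP _ _ i j hij => ?_⟩
  · rw [eq_iff, hc, Int.add_emod_right]
  · rcases hab.2 with h | h
    · exact exists_of_rel h
    · rw [Sym2.eq_swap]
      exact exists_of_rel h
  · have hper : Function.Periodic P (2 * m) := fun i => propext (hP i)
    obtain ⟨q, hq⟩ : 2 * (m : ℤ) ∣ i - j := Int.ModEq.dvd (by rw [Int.ModEq, ← hc, ← hc, hij])
    rw [show i = j + q * (2 * m) by linear_combination hq]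
    exact (hper.int_mul q j).to_iff

lemma exists_ladderModel_mobiusLadder {m : ℕ} (hm : 0 < m) :
    ∃ c, LadderModel (mobiusLadder m) m Set.univ c := by
  have emod_nonneg (i : ℤ) : 0 ≤ i % (2 * m) := Int.emod_nonneg i (by omega)
  have emod_lt (i : ℤ) : i % (2 * m) < 2 * m := Int.emod_lt_of_pos i (by omega)
  exact ⟨fun i => ⟨(i % (2 * m)).toNat, by have := emod_lt i; omega⟩,
    ladderModel_mobiusLadder fun i => Int.toNat_of_nonneg (emod_nonneg i)⟩

lemma LadderModel.comp_of_connected_fibers {m : ℤ} {R : Set ℤ} {c : ℤ → W} {ρ : W → V}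
    (h : LadderModel H m R c) (hconn : ∀ v, (H.induce (ρ ⁻¹' {v})).Connected)
    (hadj : ∀ ⦃u v⦄, G.Adj u v → ∃ a b, ρ a = u ∧ ρ b = v ∧ H.Adj a b) :
    LadderModel G m R (ρ ∘ c) where
  periodic := h.periodic.comp ρ
  surjective := Function.Surjective.comp
    (fun v => (hconn v).nonempty.elim fun a => ⟨a.1, a.2⟩) h.surjective
  exists_of_adj u v huv := by
    obtain ⟨a, b, rfl, rfl, hab⟩ := hadj huv
    obtain ⟨i, hi⟩ := h.exists_of_adj hab
    exact ⟨i, hi.imp (congrArg (Sym2.map ρ)) (.imp_right (congrArg (Sym2.map ρ)))⟩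
  iff_of_eq P hP hrail hrung i j hij := by
    have iff_of_eq {i j : ℤ} : c i = c j → (P i ↔ P j) :=
      h.iff_of_eq P hP (fun i hi => hrail i (congrArg ρ hi))
        (fun i hiR hi => hrung i hiR (congrArg ρ hi)) i j
    have iff_of_adj {i j : ℤ} (hH : H.Adj (c i) (c j)) (hij : ρ (c i) = ρ (c j)) :
        P i ↔ P j := by
      obtain ⟨k, hk | ⟨hkR, hk⟩⟩ := h.exists_of_adj hH <;>
      rcases Sym2.eq_iff.1 hk with ⟨hi, hj⟩ | ⟨hi, hj⟩ <;>
      rw [iff_of_eq hi, iff_of_eq hj] <;> rw [hi, hj] at hij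
      exacts [hrail k hij, (hrail k hij.symm).symm, hrung k hkR hij, (hrung k hkR hij.symm).symm]
    have iff_of_walk {x y : ρ ⁻¹' {ρ (c j)}} (p : (H.induce (ρ ⁻¹' {ρ (c j)})).Walk x y) :
        ∀ i j, c i = x → c j = y → (P i ↔ P j) := by
      induction p with
      | nil => exact fun i j hi hj => iff_of_eq (hi.trans hj.symm)
      | @cons x y z hxy _ ih =>
        intro i j hi hj
        obtain ⟨k, hk⟩ := h.surjective y
        refine (iff_of_adj ?_ ?_).trans (ih k j hk hj)
        · rw [hi, hk]
          exact hxy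
        · rw [hi, hk]
          exact x.2.trans y.2.symm
    obtain ⟨p⟩ := (hconn (ρ (c j))).preconnected ⟨c i, hij⟩ ⟨c j, rfl⟩
    exact iff_of_walk p i j rfl rfl

theorem IsMinor.exists_ladderModel [Nonempty V] [Finite V] {m : ℕ} (hm : 0 < m)
    (hG : IsMinor G (mobiusLadder m)) : ∃ f, LadderModel G m Set.univ f := by
  obtain ⟨ρ, hconn, hadj⟩ := hG.exists_map (mobiusLadder_connected hm)
  obtain ⟨c, hc⟩ := exists_ladderModel_mobiusLadder hm
  exact ⟨ρ ∘ c, hc.comp_of_connected_fibers hconn hadj⟩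

end MobiusLadder

/-! ### Deleting a rung -/

/-- The number of non-multiples of `m` in `(0, i]`, signed for negative `i`. For `i` not a multiple
of `m` this is the position of `i` after the multiples of `m` have been removed from `ℤ`. -/
def rank (m i : ℤ) : ℤ := i - i / m

/-- The `j`-th non-multiple of `m`, the inverse of `rank m`. -/
def skip (m j : ℤ) : ℤ := j + (j - 1) / (m - 1)

section RankSkip

variable {m i : ℤ}

lemma rank_add_self (hm : m ≠ 0) (i : ℤ) : rank m (i + m) = rank m i + (m - 1) := by
  rw [rank, rank, Int.add_ediv_of_dvd_right dvd_rfl, Int.ediv_self hm]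
  ring

lemma rank_succ_of_dvd (hm : 0 < m) (hi : m ∣ i + 1) : rank m (i + 1) = rank m i := by
  obtain ⟨q, hq⟩ := hi
  have hdiv : i / m = q - 1 := by
    rw [Int.ediv_eq_iff_of_pos hm]
    constructor <;> linarith
  rw [rank, rank, hdiv, hq, Int.mul_ediv_cancel_left q hm.ne']
  linarith

lemma rank_succ_of_not_dvd (hm : 0 < m) (hi : ¬ m ∣ i + 1) : rank m (i + 1) = rank m i + 1 := by
  have hdiv : (i + 1) / m = i / m := by
    have hlt := Int.lt_ediv_add_one_mul_self i hm
    have hne : i + 1 ≠ m * (i / m + 1) := fun h => hi ⟨_, h⟩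
    rw [Int.ediv_eq_iff_of_pos hm]
    have := Int.ediv_mul_le i hm.ne'
    constructor
    · linarith
    · exact lt_of_le_of_ne (by linarith) (by convert hne using 1; ring)
  rw [rank, rank, hdiv]
  ring

lemma skip_bounds (hm : 1 < m) (j : ℤ) :
    m * ((j - 1) / (m - 1)) < skip m j ∧ skip m j < m * ((j - 1) / (m - 1) + 1) := by
  have hle := Int.ediv_mul_le (j - 1) (b := m - 1) (by omega)
  have hlt := Int.lt_ediv_add_one_mul_self (j - 1) (b := m - 1) (by omega)
  rw [skip]
  constructor <;> linarith

lemma not_dvd_skip (hm : 1 < m) (j : ℤ) : ¬ m ∣ skip m j := by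
  rintro ⟨t, ht⟩
  have hbounds := skip_bounds hm j
  rw [ht] at hbounds
  have hlt := lt_of_mul_lt_mul_left hbounds.1 (by omega)
  have hlt' := lt_of_mul_lt_mul_left hbounds.2 (by omega)
  omega

lemma rank_skip (hm : 1 < m) (j : ℤ) : rank m (skip m j) = j := by
  have hdiv : skip m j / m = (j - 1) / (m - 1) := by
    have hbounds := skip_bounds hm j
    rw [Int.ediv_eq_iff_of_pos (by omega)]
    constructor <;> linarith
  rw [rank, hdiv, skip, add_sub_cancel_right]

lemma skip_rank (hm : 1 < m) (hi : ¬ m ∣ i) : skip m (rank m i) = i := by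
  have hdiv : (i - i / m - 1) / (m - 1) = i / m := by
    have hlt := Int.lt_ediv_add_one_mul_self i (b := m) (by omega)
    have hle := Int.ediv_mul_le i (b := m) (by omega)
    have hne : i ≠ i / m * m := fun h => hi ⟨i / m, by rw [mul_comm, ← h]⟩
    have hle' : i / m * m + 1 ≤ i := lt_of_le_of_ne hle hne.symm
    rw [Int.ediv_eq_iff_of_pos (by omega)]
    constructor <;> linarith
  rw [skip, rank, hdiv, sub_add_cancel]

end RankSkip

namespace LadderModel

variable {V : Type*} {G : SimpleGraph V} {m : ℤ} {R : Set ℤ} {f : ℤ → V} {i j k : ℤ} {u v : V}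

/-- Otherwise `f k` would be an end of a deleted rung having at most two neighbours. -/
lemma apply_sub_one_eq_or_eq_apply_add_one (h : LadderModel G m {i | ¬ m ∣ i} f)
    (h3 : KConnected G 3) (hk : m ∣ k) : f (k - 1) = f k ∨ f k = f (k + 1) := by
  by_contra! hne
  have hR (i : ℤ) (hi : ¬ m ∣ i) : ¬ m ∣ i - k := fun hd => hi ((dvd_sub_left hk).1 hd)
  obtain ⟨y, hy, hynext, hyprev⟩ := h3.exists_adj_ne_ne (f k) (f (k + 1)) (f (k - 1))
  rcases h.eq_of_adj hne.2 hne.1 (fun i hi hd => absurd hd (hR i hi)) hy with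
    hy | hy | ⟨⟨i, hi, hd⟩, -⟩
  exacts [hynext hy, hyprev hy, hR i hi hd]

lemma exists_retraction (h : LadderModel G m {i | ¬ m ∣ i} f) (h3 : KConnected G 3) :
    ∃ r : ℤ → ℤ, (∀ i, ¬ m ∣ i → r i = i) ∧ (∀ i, m ∣ i → r i = i - 1 ∨ r i = i + 1) ∧
      (∀ i, r (i + 2 * m) = r i + 2 * m) ∧ f ∘ r = f := by
  classical
  refine ⟨fun i => if m ∣ i then if f (i - 1) = f i then i - 1 else i + 1 else i,
    fun i hi => if_neg hi, fun i hi => ?_, fun i => ?_, funext fun i => ?_⟩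
  · simp only [hi, if_true]
    split_ifs
    exacts [.inl rfl, .inr rfl]
  · have hdvd : m ∣ i + 2 * m ↔ m ∣ i := dvd_add_left (dvd_mul_left m 2)
    simp only [hdvd, h.periodic i, add_sub_right_comm i, h.periodic (i - 1)]
    split_ifs <;> ring
  · simp only [Function.comp_apply]
    split_ifs with hi heq
    exacts [heq, ((h.apply_sub_one_eq_or_eq_apply_add_one h3 hi).resolve_left heq).symm, rfl]

theorem comp_skip (h : LadderModel G m {i | ¬ m ∣ i} f) (h3 : KConnected G 3) (hm : 1 < m) :
    LadderModel G (m - 1) Set.univ (f ∘ skip m) := by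
  have hm0 : 0 < m := by omega
  have hnot_dvd_succ {i : ℤ} (hi : m ∣ i) : ¬ m ∣ i + 1 := fun hi' =>
    hm.ne' (Int.eq_one_of_dvd_one hm0.le ((dvd_add_right hi).1 hi'))
  have hnot_dvd_pred {i : ℤ} (hi : m ∣ i) : ¬ m ∣ i - 1 := fun hi' =>
    hnot_dvd_succ hi' (by rwa [sub_add_cancel])
  obtain ⟨r, hr, hr_dvd, hr_add, hfr⟩ := h.exists_retraction h3
  have hcomp : (f ∘ skip m) ∘ (rank m ∘ r) = f := by
    refine Eq.trans (funext fun i => congrArg f (skip_rank hm ?_)) hfr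
    by_cases hi : m ∣ i
    · rcases hr_dvd i hi with h | h <;> rw [h]
      exacts [hnot_dvd_pred hi, hnot_dvd_succ hi]
    · rwa [hr i hi]
  have hrank {i : ℤ} (hi : m ∣ i) : rank m (r i) = rank m i ∨ rank m (r i) = rank m i + 1 := by
    rcases hr_dvd i hi with h | h <;> rw [h]
    · rw [← rank_succ_of_dvd hm0 (i := i - 1) (by rwa [sub_add_cancel]), sub_add_cancel]
      exact .inl rfl
    · exact .inr (rank_succ_of_not_dvd hm0 (hnot_dvd_succ hi))
  refine of_comp (m := m) (R := {i | ¬ m ∣ i}) (ψ := rank m ∘ r) (hcomp.symm ▸ h)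
    (fun j => ⟨skip m j, ?_⟩) (fun i => ?_) (fun i => ?_) (fun i hi => ?_) <;>
    simp only [Function.comp_apply]
  · rw [hr _ (not_dvd_skip hm j), rank_skip hm]
  · by_cases hi' : m ∣ i + 1
    · have hi : ¬ m ∣ i := fun hi => hnot_dvd_succ hi hi'
      rw [hr i hi, ← rank_succ_of_dvd hm0 hi']
      exact hrank hi'
    · rw [hr _ hi', rank_succ_of_not_dvd hm0 hi']
      by_cases hi : m ∣ i
      · rcases hrank hi with h | h <;> simp [h]
      · exact .inr (by rw [hr i hi])
  · rw [hr_add, two_mul m, ← add_assoc, rank_add_self hm0.ne', rank_add_self hm0.ne']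
    ring
  · rw [hr i hi, hr _ (by simpa using hi), rank_add_self hm0.ne']

lemma card_le {m : ℕ} (h : LadderModel G m R f) (hm : 0 < m) : Nat.card V ≤ 2 * m := by
  have hsurj : Function.Surjective fun i : Fin (2 * m) => f (i : ℕ) := fun v => by
    obtain ⟨i, rfl⟩ := h.surjective v
    have hpos : (0 : ℤ) < 2 * m := by omega
    have hlt := Int.emod_lt_of_pos i hpos
    have hnonneg := Int.emod_nonneg i hpos.ne'
    refine ⟨⟨(i % (2 * m)).toNat, by omega⟩, ?_⟩
    refine h.apply_eq_of_dvd ?_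
    rw [Int.toNat_of_nonneg hnonneg]
    exact Int.dvd_sub_self_of_emod_eq rfl
  simpa using Nat.card_le_card_of_surjective _ hsurj

lemma delete_rung (h : LadderModel G m Set.univ f) (hne : f 0 ≠ f m)
    (hdel : G.Adj (f 0) (f m) → ∃ j, ¬ m ∣ j ∧ s(f j, f (j + m)) = s(f 0, f m)) :
    LadderModel G m {i | ¬ m ∣ i} f where
  periodic := h.periodic
  surjective := h.surjective
  exists_of_adj u v huv := by
    obtain ⟨i, hi | ⟨-, hi⟩⟩ := h.exists_of_adj huv
    · exact ⟨i, .inl hi⟩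
    · by_cases hd : m ∣ i
      · rw [h.rung_eq_of_dvd (i := i) (j := 0) (by rwa [sub_zero]), zero_add] at hi
        obtain ⟨j, hjd, hj⟩ := hdel (by rwa [← mem_edgeSet, ← hi])
        exact ⟨j, .inr ⟨hjd, hi.trans hj.symm⟩⟩
      · exact ⟨i, .inr ⟨hd, hi⟩⟩
  iff_of_eq P hP hrail hrung := by
    refine h.iff_of_eq P hP hrail fun i _ hi => hrung i (fun hd => hne ?_) hi
    have hdiag := h.rung_eq_of_dvd (i := i) (j := 0) (by rwa [sub_zero])
    have hfi : Sym2.IsDiag s(f i, f (i + m)) := hi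
    rwa [hdiag, zero_add] at hfi

theorem exists_ladderModel_sub_one (h : LadderModel G m Set.univ f) (h3 : KConnected G 3)
    (hm : 1 < m) (hne : f k ≠ f (k + m))
    (hdel : G.Adj (f k) (f (k + m)) →
      ∃ j, ¬ m ∣ j - k ∧ s(f j, f (j + m)) = s(f k, f (k + m))) :
    ∃ f', LadderModel G (m - 1) Set.univ f' := by
  refine ⟨_, ((h.shift k).delete_rung ?_ ?_).comp_skip h3 hm⟩ <;>
    simp only [zero_add, add_comm m k]
  · exact hne
  · intro hadj
    obtain ⟨j, hjd, hj⟩ := hdel hadj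
    refine ⟨j - k, hjd, ?_⟩
    rwa [sub_add_cancel, add_right_comm, sub_add_cancel]

/-! ### Contracted rungs -/

/-- The vertices whose branch sets meet the first `j + 1` rungs: one side of the separation of `G`
at the rungs `0` and `j`, the other one being `finalPart m f j`. -/
def initialPart (m : ℤ) (f : ℤ → V) (j : ℤ) : Set V := f '' {i | i % m ≤ j}

/-- The vertices whose branch sets meet the rung at `0` or a rung from the `j`-th on. -/
def finalPart (m : ℤ) (f : ℤ → V) (j : ℤ) : Set V := f '' {i | i % m = 0 ∨ j ≤ i % m}

lemma initialPart_union_finalPart (h : LadderModel G m R f) :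
    initialPart m f j ∪ finalPart m f j = Set.univ := by
  refine Set.eq_univ_of_forall fun v => ?_
  obtain ⟨i, rfl⟩ := h.surjective v
  exact (le_total (i % m) j).imp (fun hi => ⟨i, hi, rfl⟩) fun hi => ⟨i, .inr hi, rfl⟩

lemma initialPart_or_finalPart_of_adj (h : LadderModel G m R f) (hm : 0 < m)
    (huv : G.Adj u v) : (u ∈ initialPart m f j ∧ v ∈ initialPart m f j) ∨
      (u ∈ finalPart m f j ∧ v ∈ finalPart m f j) := by
  have hsplit {i i' : ℤ} (huv : s(u, v) = s(f i, f i'))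
      (hi : (i % m ≤ j ∧ i' % m ≤ j) ∨ (j ≤ i % m ∧ (i' % m = 0 ∨ j ≤ i' % m))) :
      (u ∈ initialPart m f j ∧ v ∈ initialPart m f j) ∨
        (u ∈ finalPart m f j ∧ v ∈ finalPart m f j) := by
    rcases Sym2.eq_iff.1 huv with ⟨rfl, rfl⟩ | ⟨rfl, rfl⟩
    · exact hi.imp (fun h => ⟨⟨i, h.1, rfl⟩, ⟨i', h.2, rfl⟩⟩)
        fun h => ⟨⟨i, .inr h.1, rfl⟩, ⟨i', h.2, rfl⟩⟩
    · exact hi.imp (fun h => ⟨⟨i', h.2, rfl⟩, ⟨i, h.1, rfl⟩⟩)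
        fun h => ⟨⟨i', h.2, rfl⟩, ⟨i, .inr h.1, rfl⟩⟩
  obtain ⟨i, hi | ⟨-, hi⟩⟩ := h.exists_of_adj huv
  · have := add_one_emod hm i
    have := Int.emod_nonneg i hm.ne'
    exact hsplit hi (by omega)
  · exact hsplit hi (by rw [Int.add_emod_right]; omega)

lemma eq_or_eq_of_emod_eq (h : LadderModel G m R f) (hij : i % m = j) :
    f i = f j ∨ f i = f (j + m) :=
  h.apply_eq_or_of_dvd (Int.dvd_self_sub_of_emod_eq hij)

lemma initialPart_inter_finalPart_subset (h : LadderModel G m R f) (hm : 0 < m)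
    (h0 : f 0 = f m) : initialPart m f j ∩ finalPart m f j ⊆ {f 0, f j, f (j + m)} := by
  rintro v ⟨⟨i, hi, rfl⟩, i', hi', heq⟩
  by_contra! hv
  simp only [Set.mem_insert_iff, Set.mem_singleton_iff, not_or] at hv
  have emod_ne {x : ℤ} (hx : f x = f i) : x % m ≠ j ∧ x % m ≠ 0 := by
    refine ⟨fun hxj => ?_, fun hx0 => hv.1 ?_⟩
    · exact (h.eq_or_eq_of_emod_eq hxj).elim (hx ▸ hv.2.1) (hx ▸ hv.2.2)
    · have := h.eq_or_eq_of_emod_eq hx0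
      rwa [zero_add, ← h0, or_self, hx] at this
  have hiff := h.iff_of_eq (fun x => f x = f i ∧ x % m < j) (fun x => ?_) (fun x hx => ?_)
    (fun x _ hx => ?_) i i' heq.symm
  · have := (hiff.1 ⟨rfl, lt_of_le_of_ne hi (emod_ne rfl).1⟩).2
    have := (emod_ne heq).2
    rcases hi' with hi' | hi' <;> omega
  · rw [h.periodic x, Int.add_mul_emod_self_right]
  · rw [← hx]
    refine and_congr_right fun hxi => ?_
    have := emod_ne (hx.symm.trans hxi)
    rcases add_one_emod hm x with hx' | hx' <;> omega
  · rw [← hx, Int.add_emod_right]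

lemma initialPart_eq_univ_or_finalPart_eq_univ (h : LadderModel G m R f)
    (h4 : InternallyFourConnected G) (hm : 0 < m) (h0 : f 0 = f m)
    (hrung : f j = f (j + m) ∨ G.Adj (f j) (f (j + m))) :
    initialPart m f j = Set.univ ∨ finalPart m f j = Set.univ :=
  h4.eq_univ_or_eq_univ h.initialPart_union_finalPart
    (fun _ _ => h.initialPart_or_finalPart_of_adj hm)
    (h.initialPart_inter_finalPart_subset hm h0) hrung

lemma card_le_five_of_initialPart_eq_univ (h : LadderModel G m R f) (hm : 0 < m)
    (h0 : f 0 = f m) (hinit : initialPart m f (j + 1) = Set.univ)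
    (hfinal : finalPart m f j = Set.univ) : Nat.card V ≤ 5 := by
  classical
  rw [← Set.ncard_univ]
  have hsub : Set.univ ⊆
      (({f 0, f j, f (j + m), f (j + 1), f (j + 1 + m)} : Finset V) : Set V) := by
    rintro v -
    obtain ⟨i, hi, rfl⟩ := hinit.ge (Set.mem_univ v)
    simp only [Finset.coe_insert, Finset.coe_singleton, Set.mem_insert_iff, Set.mem_singleton_iff]
    rcases (show i % m ≤ j + 1 from hi).lt_or_eq with hlt | heq
    · have := h.initialPart_inter_finalPart_subset hm h0
        ⟨⟨i, Int.lt_add_one_iff.1 hlt, rfl⟩, hfinal.ge (Set.mem_univ (f i))⟩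
      simp only [Set.mem_insert_iff, Set.mem_singleton_iff] at this
      tauto
    · have := h.eq_or_eq_of_emod_eq heq
      tauto
  exact (Set.ncard_le_ncard hsub).trans ((Set.ncard_coe_finset _).trans_le Finset.card_le_five)

theorem card_le_five (h : LadderModel G m R f) (h4 : InternallyFourConnected G) (hm : 0 < m)
    (h0 : f 0 = f m) (hrung : ∀ i, f i = f (i + m) ∨ G.Adj (f i) (f (i + m))) :
    Nat.card V ≤ 5 := by
  by_contra! hcard
  have hsweep (j : ℕ) : initialPart m f (j - 1) ≠ Set.univ := by
    induction j with
    | zero =>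
      intro hinit
      obtain ⟨i, hi, -⟩ := hinit.ge (Set.mem_univ (f 0))
      exact (Int.emod_nonneg i hm.ne').not_gt (Int.lt_of_le_sub_one hi)
    | succ j ih =>
      intro hinit
      have hfinal := (h.initialPart_eq_univ_or_finalPart_eq_univ h4 hm h0 (hrung _)).resolve_left ih
      refine hcard.not_ge (h.card_le_five_of_initialPart_eq_univ hm h0 ?_ hfinal)
      rwa [Nat.cast_succ, add_sub_right_comm] at hinit
  obtain ⟨v, hv⟩ := (Set.ne_univ_iff_exists_notMem _).1 (hsweep m.toNat)
  obtain ⟨i, rfl⟩ := h.surjective v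
  refine hv ⟨i, ?_, rfl⟩
  have := Int.emod_lt_of_pos i hm
  simp only [Set.mem_ofPred_eq]
  omega

end LadderModel

/-! ### Tight models -/

/-- A ladder model all of whose rungs are needed: each one carries an edge of `G`, and the edges
carried by two rungs are different. This is what minimality of `m` yields for a model without
contracted rungs. -/
structure TightLadderModel {V : Type*} (G : SimpleGraph V) (m : ℤ) (f : ℤ → V) : Prop
    extends LadderModel G m Set.univ f where
  adj_rung : ∀ i, G.Adj (f i) (f (i + m))
  rung_unique : ∀ i j, s(f i, f (i + m)) = s(f j, f (j + m)) → m ∣ i - j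

/-- The circulant graph on `Fin N` with connection set `{p, q, -p, -q}`, the common generalisation
of `mobiusLadder` and `squareCycle`. -/
def circulant (N p q : ℕ) : SimpleGraph (Fin N) :=
  fromRel fun i j => j.val = (i.val + p) % N ∨ j.val = (i.val + q) % N

lemma nonempty_iso_circulant {V : Type*} {G : SimpleGraph V} {N p q : ℕ} (hN : 0 < N)
    {g : ℤ → V} (hg : Function.Surjective g) (heq : ∀ i j, g i = g j ↔ (N : ℤ) ∣ i - j)
    (hadj : ∀ u v, G.Adj u v ↔
      ∃ i, s(u, v) = s(g i, g (i + p)) ∨ s(u, v) = s(g i, g (i + q))) :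
    Nonempty (G ≃g circulant N p q) := by
  have hval (a b : Fin N) (r : ℕ) : g b = g (a + r) ↔ b.val = (a.val + r) % N := by
    rw [heq, ← Int.modEq_iff_dvd, ← Nat.cast_add, Int.natCast_modEq_iff, Nat.ModEq,
      Nat.mod_eq_of_lt b.isLt, eq_comm]
  have hpair (a b : Fin N) (r : ℕ) : (∃ i, s(g a, g b) = s(g i, g (i + r))) ↔
      b.val = (a.val + r) % N ∨ a.val = (b.val + r) % N := by
    have hcongr {i j : ℤ} (hij : g i = g j) : g (i + r) = g (j + r) := by
      rwa [heq, add_sub_add_right_eq_sub, ← heq]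
    rw [← hval, ← hval]
    refine ⟨fun ⟨i, hi⟩ => ?_, fun h => h.elim (fun h => ⟨a, by rw [h]⟩)
      fun h => ⟨b, by rw [h, Sym2.eq_swap]⟩⟩
    rcases Sym2.eq_iff.1 hi with ⟨ha, hb⟩ | ⟨ha, hb⟩
    exacts [.inl (hb.trans (hcongr ha).symm), .inr (ha.trans (hcongr hb).symm)]
  have hbij : Function.Bijective fun a : Fin N => g a := by
    refine ⟨fun a b hab => ?_, fun v => ?_⟩
    · have := (hval b a 0).1 (by simpa using hab)
      exact Fin.ext (by rwa [add_zero, Nat.mod_eq_of_lt b.isLt] at this)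
    · obtain ⟨i, rfl⟩ := hg v
      have hN' : (0 : ℤ) < N := by omega
      have hlt := Int.emod_lt_of_pos i hN'
      refine ⟨⟨(i % N).toNat, by omega⟩, (heq _ _).2 ?_⟩
      rw [Int.toNat_of_nonneg (Int.emod_nonneg i hN'.ne')]
      exact Int.dvd_sub_self_of_emod_eq rfl
  have hiff (a b : Fin N) : G.Adj (g a) (g b) ↔ (circulant N p q).Adj a b := by
    rw [circulant, fromRel_adj, or_or_or_comm, ← hpair a b p, ← hpair a b q, ← exists_or, ← hadj]
    exact ⟨fun h => ⟨fun hab => h.ne (by rw [hab]), h⟩, And.right⟩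
  exact ⟨Iso.symm ⟨Equiv.ofBijective _ hbij, fun {a b} => hiff a b⟩⟩

namespace TightLadderModel

variable {V : Type*} {G : SimpleGraph V} {m : ℤ} {f : ℤ → V} {i k : ℤ} {y : V}

lemma rung_ne (h : TightLadderModel G m f) (i : ℤ) : f i ≠ f (i + m) := (h.adj_rung i).ne

lemma shift (h : TightLadderModel G m f) (k : ℤ) : TightLadderModel G m fun i => f (i + k) where
  toLadderModel := h.toLadderModel.shift k
  adj_rung i := by
    rw [add_right_comm]
    exact h.adj_rung (i + k)
  rung_unique i j hij := by
    rw [add_right_comm i, add_right_comm j] at hij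
    simpa using h.rung_unique _ _ hij

lemma eq_of_adj (h : TightLadderModel G m f) (hnext : f k ≠ f (k + 1)) (hprev : f (k - 1) ≠ f k)
    (hy : G.Adj (f k) y) : y = f (k + 1) ∨ y = f (k - 1) ∨ y = f (k + m) :=
  (h.toLadderModel.eq_of_adj hnext hprev (fun i _ _ => h.rung_ne i) hy).imp_right
    (Or.imp_right And.right)

theorem nonempty_iso_mobiusLadder {m : ℕ} (h : TightLadderModel G m f) (h3 : KConnected G 3)
    (hm : 0 < m) (hrail : ∀ i, f i ≠ f (i + 1)) : Nonempty (G ≃g mobiusLadder m) := by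
  have hprev (i : ℤ) : f (i - 1) ≠ f i := by simpa using hrail (i - 1)
  have hadj_rail (i : ℤ) : G.Adj (f i) (f (i + 1)) := by
    obtain ⟨y, hy, hyprev, hyrung⟩ := h3.exists_adj_ne_ne (f i) (f (i - 1)) (f (i + m))
    rcases h.eq_of_adj (hrail i) (hprev i) hy with rfl | rfl | rfl
    exacts [hy, absurd rfl hyprev, absurd rfl hyrung]
  refine nonempty_iso_circulant (p := 1) (by omega) h.surjective (fun i j => ⟨fun hij => ?_,
    fun hd => h.apply_eq_of_dvd (by simpa using hd)⟩) fun u v => ⟨fun huv => ?_, ?_⟩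
  · simpa using h.dvd_of_apply_eq (hrail j) (hprev j) (fun i _ _ => h.rung_ne i) hij
  · simpa using h.exists_of_adj huv
  · rintro ⟨i, hi | hi⟩ <;> rw [← mem_edgeSet, hi]
    exacts [hadj_rail i, h.adj_rung i]

lemma ne_of_apply_eq_apply_add_one (h : TightLadderModel G m f) (hm : 1 < m)
    (hi : f i = f (i + 1)) : f (i + m) ≠ f (i + m + 1) := fun him => by
  have hd := h.rung_unique i (i + 1) (by rw [← hi, add_right_comm, ← him])
  rw [sub_add_cancel_left, dvd_neg] at hd
  exact hm.ne' (Int.eq_one_of_dvd_one (by omega) hd)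

/-- Otherwise `f (i + m + 1)` would have only the neighbours `f (i + m + 2)`, `f (i + m)` and
`f i`, the last two of which are adjacent. -/
lemma apply_eq_of_apply_eq_apply_add_one (h : TightLadderModel G m f)
    (h4 : InternallyFourConnected G) (hm : 1 < m) (hi : f i = f (i + 1)) :
    f (i + m + 1) = f (i + m + 1 + 1) := by
  by_contra hnext
  have hprev := h.ne_of_apply_eq_apply_add_one hm hi
  obtain ⟨y, hy, hynext, hyi, hyim⟩ := h4.exists_adj_ne (f (i + m + 1)) (f (i + m + 1 + 1))
    (h.adj_rung i)
  have hopp : f (i + m + 1 + m) = f i := by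
    rw [hi]
    exact h.apply_eq_of_dvd ⟨1, by ring⟩
  rcases h.eq_of_adj hnext (by rwa [add_sub_cancel_right]) hy with hy' | hy' | hy'
  · exact hynext hy'
  · exact hyim (by rwa [add_sub_cancel_right] at hy')
  · exact hyi (hy'.trans hopp)

theorem odd_and_apply_eq_iff_even (h : TightLadderModel G m f) (h4 : InternallyFourConnected G)
    (hm : 1 < m) (h0 : f 0 = f 1) : Odd m ∧ ∀ i, f i = f (i + 1) ↔ Even i := by
  have hdouble (n : ℕ) : f (2 * n) = f (2 * n + 1) := by
    induction n with
    | zero => simpa using h0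
    | succ n ih =>
      have hn := h.apply_eq_of_apply_eq_apply_add_one h4 hm
        (h.apply_eq_of_apply_eq_apply_add_one h4 hm ih)
      rw [← h.periodic (2 * ((n + 1 : ℕ) : ℤ)), ← h.periodic (2 * ((n + 1 : ℕ) : ℤ) + 1)]
      convert hn using 2 <;> push_cast <;> ring
  have heven {i : ℤ} (hi : Even i) : f i = f (i + 1) := by
    obtain ⟨t, rfl⟩ := even_iff_exists_two_mul.1 hi
    have hn := hdouble (t % m).toNat
    rw [Int.toNat_of_nonneg (Int.emod_nonneg t (by omega))] at hn
    have hdvd : 2 * m ∣ 2 * t - 2 * (t % m) :=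
      ⟨t / m, by linear_combination -2 * Int.mul_ediv_add_emod t m⟩
    rw [h.apply_eq_of_dvd hdvd, hn]
    exact (h.apply_eq_of_dvd (by rwa [add_sub_add_right_eq_sub])).symm
  refine ⟨?_, fun i => ⟨fun hi => ?_, heven⟩⟩
  · by_contra hodd
    refine h.ne_of_apply_eq_apply_add_one hm (heven Even.zero) (heven ?_)
    simpa using hodd
  · by_contra hodd
    have hprev : f (i - 1) = f (i - 1 + 1) := heven (Int.even_sub_one.2 hodd)
    have := h.apply_eq_of_apply_eq_apply_add_one h4 hm hprev
    refine h.ne_of_apply_eq_apply_add_one hm hi ?_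
    convert this using 2 <;> ring

end TightLadderModel

/-- The reading order of a ladder model in which every other rail is contracted: with `m` odd,
`i ↦ (m + 1) * i` turns the rungs into the steps of length one around the cycle and the surviving
rails into the steps of length two. -/
def foldedRim {V : Type*} (m : ℤ) (f : ℤ → V) (i : ℤ) : V := f ((m + 1) * i)

section FoldedRim

variable {V : Type*} {G : SimpleGraph V} {m : ℤ} {R : Set ℤ} {f : ℤ → V} {i j : ℤ}

lemma LadderModel.foldedRim_eq_of_even (h : LadderModel G m R f) (hi : Even i) :
    foldedRim m f i = f i := by
  obtain ⟨t, rfl⟩ := even_iff_exists_two_mul.1 hi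
  exact h.apply_eq_of_dvd ⟨t, by ring⟩

lemma LadderModel.foldedRim_eq_of_odd (h : LadderModel G m R f) (hi : Odd i) :
    foldedRim m f i = f (i + m) := by
  obtain ⟨t, rfl⟩ := hi
  exact h.apply_eq_of_dvd ⟨t, by ring⟩

lemma LadderModel.apply_eq_foldedRim_sub_one (h : LadderModel G m R f)
    (hpair : ∀ i, f i = f (i + 1) ↔ Even i) (hi : Odd i) : f i = foldedRim m f (i - 1) := by
  have heven : Even (i - 1) := hi.sub_odd odd_one
  rw [h.foldedRim_eq_of_even heven, (hpair _).2 heven, sub_add_cancel]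

lemma LadderModel.rung_eq_foldedRim (h : LadderModel G m R f) (hm : Odd m)
    (hpair : ∀ i, f i = f (i + 1) ↔ Even i) (i : ℤ) :
    s(f i, f (i + m)) = s(foldedRim m f (i - 1), foldedRim m f i) := by
  rcases Int.even_or_odd i with hi | hi
  · have heven : Even (i - 1 + m) := (hi.sub_odd odd_one).add_odd hm
    rw [h.foldedRim_eq_of_even hi, h.foldedRim_eq_of_odd (hi.sub_odd odd_one), (hpair _).2 heven,
      Sym2.eq_swap, sub_add_eq_add_sub, sub_add_cancel]
  · rw [h.foldedRim_eq_of_odd hi, h.apply_eq_foldedRim_sub_one hpair hi]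

lemma LadderModel.exists_foldedRim_of_adj (h : LadderModel G m R f) (hm : Odd m)
    (hpair : ∀ i, f i = f (i + 1) ↔ Even i) {u v : V} (huv : G.Adj u v) :
    ∃ i, s(u, v) = s(foldedRim m f i, foldedRim m f (i + 1)) ∨
      s(u, v) = s(foldedRim m f i, foldedRim m f (i + 2)) := by
  obtain ⟨i, hi | ⟨-, hi⟩⟩ := h.exists_of_adj huv <;> refine ⟨i - 1, ?_⟩
  · have hne : f i ≠ f (i + 1) := fun heq => by
      rw [← mem_edgeSet, hi, heq] at huv
      exact G.irrefl huv
    have hodd : Odd i := Int.not_even_iff_odd.1 (mt (hpair i).2 hne)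
    right
    rw [hi, h.apply_eq_foldedRim_sub_one hpair hodd,
      ← h.foldedRim_eq_of_even (hodd.add_odd odd_one)]
    ring_nf
  · left
    rw [hi, h.rung_eq_foldedRim hm hpair, sub_add_cancel]

lemma LadderModel.foldedRim_eq_of_dvd (h : LadderModel G m R f) (hm : Odd m) (hij : m ∣ i - j) :
    foldedRim m f i = foldedRim m f j := by
  obtain ⟨r, rfl⟩ := hm
  obtain ⟨q, hq⟩ := hij
  exact h.apply_eq_of_dvd ⟨(r + 1) * q, by linear_combination (2 * r + 1 + 1) * hq⟩

namespace TightLadderModel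

lemma foldedRim_eq_iff (h : TightLadderModel G m f) (hm : Odd m)
    (hpair : ∀ i, f i = f (i + 1) ↔ Even i) : foldedRim m f i = foldedRim m f j ↔ m ∣ i - j := by
  refine ⟨fun hij => ?_, h.foldedRim_eq_of_dvd hm⟩
  have hround (t : ℤ) : 2 * ((m + 1) * t / 2) = (m + 1) * t :=
    Int.two_mul_ediv_two_of_even ((hm.add_odd odd_one).mul_right t)
  have hiff := h.iff_of_eq (fun x => m ∣ 2 * (x / 2) - (m + 1) * j) (fun x => ?_) (fun x hx => ?_)
    (fun x _ hx => absurd hx (h.rung_ne x)) _ _ hij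
  · rw [hround, hround, sub_self, ← mul_sub, add_one_mul] at hiff
    exact (dvd_add_right (dvd_mul_right m _)).1 (hiff.2 (dvd_zero m))
  · rw [Int.add_mul_ediv_left x m two_ne_zero, mul_add, add_sub_right_comm]
    exact dvd_add_left (dvd_mul_left m 2)
  · obtain ⟨t, rfl⟩ := even_iff_exists_two_mul.1 ((hpair x).1 hx)
    rw [show (2 * t + 1) / 2 = 2 * t / 2 by omega]

lemma adj_foldedRim_add_one (h : TightLadderModel G m f) (hm : Odd m)
    (hpair : ∀ i, f i = f (i + 1) ↔ Even i) (i : ℤ) :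
    G.Adj (foldedRim m f i) (foldedRim m f (i + 1)) := by
  have hrung := h.rung_eq_foldedRim hm hpair (i + 1)
  rw [add_sub_cancel_right] at hrung
  rw [← mem_edgeSet, ← hrung]
  exact h.adj_rung _

lemma adj_foldedRim_add_two (h : TightLadderModel G m f) (h4 : InternallyFourConnected G)
    (hm : Odd m) (hpair : ∀ i, f i = f (i + 1) ↔ Even i) (i : ℤ) :
    G.Adj (foldedRim m f i) (foldedRim m f (i + 2)) := by
  have hpred : G.Adj (foldedRim m f (i + -2)) (foldedRim m f (i + -1)) := by
    convert h.adj_foldedRim_add_one hm hpair (i + -2) using 2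
    ring
  obtain ⟨y, hy, hynext, hyprev₂, hyprev⟩ :=
    h4.exists_adj_ne (foldedRim m f i) (foldedRim m f (i + 1)) hpred
  have hshift {j : ℤ} (hij : foldedRim m f i = foldedRim m f j) (d : ℤ) :
      foldedRim m f (j + d) = foldedRim m f (i + d) := by
    rw [h.foldedRim_eq_iff hm hpair] at hij ⊢
    rwa [add_sub_add_right_eq_sub, dvd_sub_comm]
  obtain ⟨j, hj | hj⟩ := h.exists_foldedRim_of_adj hm hpair hy <;>
    rcases Sym2.eq_iff.1 hj with ⟨hij, rfl⟩ | ⟨hij, rfl⟩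
  · exact absurd (hshift hij 1) hynext
  · have := hshift hij (-1)
    rw [add_neg_cancel_right] at this
    exact absurd this hyprev
  · rwa [hshift hij 2] at hy
  · have := hshift hij (-2)
    rw [add_neg_cancel_right] at this
    exact absurd this hyprev₂

theorem nonempty_iso_squareCycle {m : ℕ} (h : TightLadderModel G m f)
    (h4 : InternallyFourConnected G) (hm : Odd m) (hpair : ∀ i, f i = f (i + 1) ↔ Even i) :
    Nonempty (G ≃g squareCycle m) := by
  have hmZ : Odd (m : ℤ) := hm.natCast
  refine nonempty_iso_circulant (p := 1) (q := 2) hm.pos (g := foldedRim m f) (fun v => ?_)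
    (fun i j => h.foldedRim_eq_iff hmZ hpair) fun u v =>
      ⟨fun huv => h.exists_foldedRim_of_adj hmZ hpair huv, ?_⟩
  · obtain ⟨i, rfl⟩ := h.surjective v
    rcases Int.even_or_odd i with hi | hi
    exacts [⟨i, h.foldedRim_eq_of_even hi⟩, ⟨i - 1, (h.apply_eq_foldedRim_sub_one hpair hi).symm⟩]
  · rintro ⟨i, hi | hi⟩ <;> rw [← mem_edgeSet, hi]
    exacts [h.adj_foldedRim_add_one hmZ hpair i, h.adj_foldedRim_add_two h4 hmZ hpair i]

end TightLadderModel

end FoldedRim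

/-! ### Classification -/

section Classification

variable {V : Type*} {G : SimpleGraph V} {f : ℤ → V}

theorem TightLadderModel.exists_iso {m : ℕ} (h : TightLadderModel G m f)
    (h4 : InternallyFourConnected G) (hm : 3 ≤ m) :
    ∃ n, 3 ≤ n ∧ (Nonempty (G ≃g mobiusLadder n) ∨ Nonempty (G ≃g squareCycle (2 * n - 1))) := by
  by_cases hrail : ∀ i, f i ≠ f (i + 1)
  · exact ⟨m, hm, .inl (h.nonempty_iso_mobiusLadder h4.1 (by omega) hrail)⟩
  · push Not at hrail
    obtain ⟨k, hk⟩ := hrail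
    have hshift := h.shift k
    obtain ⟨hodd, hpair⟩ :=
      hshift.odd_and_apply_eq_iff_even h4 (by omega) (by simpa [add_comm] using hk)
    rw [Int.odd_coe_nat] at hodd
    obtain ⟨φ⟩ := hshift.nonempty_iso_squareCycle h4 hodd hpair
    obtain ⟨r, rfl⟩ := hodd
    have hcard : Nat.card V = 2 * r + 1 := by simpa using Nat.card_congr φ.toEquiv
    exact ⟨r + 1, by have := h4.2.1; omega, .inr ⟨φ⟩⟩

theorem LadderModel.card_le_five_or_tight {m : ℤ} (h : LadderModel G m Set.univ f)
    (h4 : InternallyFourConnected G) (hm : 1 < m)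
    (hmin : ∀ f', ¬ LadderModel G (m - 1) Set.univ f') :
    Nat.card V ≤ 5 ∨ TightLadderModel G m f := by
  have hrung (k : ℤ) (hne : f k ≠ f (k + m)) : G.Adj (f k) (f (k + m)) ∧
      ∀ j, s(f j, f (j + m)) = s(f k, f (k + m)) → m ∣ j - k := by
    by_contra! hdel
    obtain ⟨f', hf'⟩ := h.exists_ladderModel_sub_one h4.1 hm hne
      fun hadj => (hdel hadj).imp fun _ => And.symm
    exact hmin f' hf'
  by_cases hcontr : ∃ k, f k = f (k + m)
  · obtain ⟨k, hk⟩ := hcontr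
    refine .inl ((h.shift k).card_le_five h4 (by omega) ?_ fun i => ?_)
    · rwa [zero_add, add_comm m]
    · rw [add_right_comm]
      exact or_iff_not_imp_left.2 fun hne => (hrung (i + k) hne).1
  · push Not at hcontr
    exact .inr ⟨h, fun i => (hrung i (hcontr i)).1, fun i j => (hrung j (hcontr j)).2 i⟩

theorem LadderModel.exists_iso {m : ℕ} (h : LadderModel G m Set.univ f) (hm : 0 < m)
    (h4 : InternallyFourConnected G) :
    ∃ n, 3 ≤ n ∧ (Nonempty (G ≃g mobiusLadder n) ∨ Nonempty (G ≃g squareCycle (2 * n - 1))) := by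
  induction m, hm using Nat.le_induction generalizing f with
  | base =>
    have := h.card_le one_pos
    have := h4.2.1
    omega
  | succ m hm ih =>
    by_cases hmin : ∃ f', LadderModel G m Set.univ f'
    · exact hmin.elim fun _ => ih
    · push Not at hmin
      have := h.card_le m.succ_pos
      have := h4.2.1
      rcases h.card_le_five_or_tight h4 (by omega) (by simpa using hmin) with hcard | htight
      · exact ⟨3, le_rfl, .inr (h4.nonempty_iso_squareCycle_five hcard)⟩
      · exact htight.exists_iso h4 (by omega)

end Classification

theorem stmt6_general {V : Type*} {G : SimpleGraph V} (h4 : InternallyFourConnected G) {m : ℕ}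
    (hm : IsMinor G (mobiusLadder m)) :
    ∃ n, 3 ≤ n ∧
      (Nonempty (G ≃g mobiusLadder n) ∨ Nonempty (G ≃g squareCycle (2 * n - 1))) := by
  have : Finite V := h4.1.finite
  have : Nonempty V := (Nat.card_pos_iff.1 (by have := h4.2.1; omega)).1
  have hpos : 0 < m := by
    obtain ⟨B, hne, -⟩ := hm
    have := (hne (Classical.arbitrary V)).some.isLt
    omega
  obtain ⟨f, hf⟩ := hm.exists_ladderModel hpos
  exact hf.exists_iso hpos h4

/-- An internally 4-connected nonplanar minor of a Möbius ladder is `M_n` or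
`C²_{2n-1}` for some `n ≥ 3`. -/
theorem stmt6 {V : Type} [Fintype V] (G : SimpleGraph V)
    (h4 : InternallyFourConnected G) (hnp : ¬ Planar G)
    (hm : ∃ m, 3 ≤ m ∧ IsMinor G (mobiusLadder m)) :
    ∃ n, 3 ≤ n ∧
      (Nonempty (G ≃g mobiusLadder n) ∨ Nonempty (G ≃g squareCycle (2 * n - 1))) := by
  obtain ⟨_, _, hm⟩ := hm
  exact stmt6_general h4 hm
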